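/- arXiv:2102.11072 — 2 statements merged into one kernel-verified Lean document; each statement's English description precedes it below -/
import Mathlib

section
/- Let n ≥ 1 be a natural number and for each i ∈ {1,…,n} let a_i < b_i be real bounds. If X₁, X₂ ∈ ℝⁿ satisfy a_i ≤ X₁ᵢ ≤ b_i and a_i ≤ X₂ᵢ ≤ b_i for every i, then 0 ≤ d(X₁, X₂) ≤ 1. Consequently, for every ε > 0, with σ_i = n(b_i − a_i)/ε, the multiplicative bound between any pair of in-range secrets is at most e^ε: for all R ∈ ℝⁿ, ∏_{i=1}^n f_{σ_i}(R_i − X₁ᵢ) ≤ e^ε · ∏_{i=1}^n f_{σ_i}(R_i − X₂ᵢ). -/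
open Real Finset

/-!
Moving the centre of a Laplace density of scale `σ` from `x` to `y` costs, by the triangle
inequality, a factor of at most `exp (|x - y| / σ)`. With the scales `σ i = n * w i / ε` the
product of these factors is `exp (ε * d x y)`, where `d x y` averages the ratios
`|x i - y i| / w i`, each at most `1` when `x i` and `y i` lie in a common interval of width `w i`.
-/

open scoped BigOperators

section Laplace

variable {ι : Type*} [Fintype ι]

/-- The Laplace density of scale `σ` centred at `0`, meaningful for `0 < σ`. -/
noncomputable def laplaceDensity (σ t : ℝ) : ℝ :=
  exp (-|t| / σ) / (2 * σ)

/-- The average over the coordinates of the distances `|x i - y i| / w i`, where `w i` is the width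
`b i - a i` of the range of the `i`-th coordinate; this is the metric on secrets in which privacy
loss is measured. -/
noncomputable def normalizedDist (w x y : ι → ℝ) : ℝ :=
  𝔼 i, |x i - y i| / w i

/-- The scale of the Laplace noise on the `i`-th coordinate for the privacy budget `ε`, when the
`i`-th range has width `w i`. -/
noncomputable def laplaceScale (w : ι → ℝ) (ε : ℝ) (i : ι) : ℝ :=
  Fintype.card ι * w i / ε

theorem laplaceDensity_pos {σ : ℝ} (hσ : 0 < σ) (t : ℝ) : 0 < laplaceDensity σ t := by
  unfold laplaceDensity
  positivity

theorem laplaceDensity_le_exp_mul {σ : ℝ} (hσ : 0 < σ) (s t : ℝ) :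
    laplaceDensity σ s ≤ exp (|s - t| / σ) * laplaceDensity σ t := by
  have triangle : -|s| ≤ |s - t| + -|t| := by
    linarith [abs_sub_abs_le_abs_sub t s, abs_sub_comm s t]
  calc exp (-|s| / σ) / (2 * σ)
      ≤ exp ((|s - t| + -|t|) / σ) / (2 * σ) := by gcongr
    _ = exp (|s - t| / σ) * laplaceDensity σ t := by
      rw [add_div, exp_add, mul_div_assoc, laplaceDensity]

theorem prod_laplaceDensity_le_exp_sum_mul {σ : ι → ℝ} (hσ : ∀ i, 0 < σ i) (x y r : ι → ℝ) :
    ∏ i, laplaceDensity (σ i) (r i - x i) ≤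
      exp (∑ i, |x i - y i| / σ i) * ∏ i, laplaceDensity (σ i) (r i - y i) := by
  rw [exp_sum, ← prod_mul_distrib]
  refine prod_le_prod (fun i _ ↦ (laplaceDensity_pos (hσ i) _).le) fun i _ ↦ ?_
  simpa only [sub_sub_sub_cancel_left, abs_sub_comm (y i)] using
    laplaceDensity_le_exp_mul (hσ i) (r i - x i) (r i - y i)

theorem normalizedDist_nonneg {w : ι → ℝ} (hw : ∀ i, 0 ≤ w i) (x y : ι → ℝ) :
    0 ≤ normalizedDist w x y :=
  expect_nonneg fun i _ ↦ div_nonneg (abs_nonneg _) (hw i)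

theorem normalizedDist_le_one [Nonempty ι] {w x y : ι → ℝ} (hxy : ∀ i, |x i - y i| ≤ w i) :
    normalizedDist w x y ≤ 1 :=
  expect_le univ_nonempty fun i _ ↦
    div_le_one_of_le₀ (hxy i) ((abs_nonneg _).trans (hxy i))

theorem laplaceScale_pos [Nonempty ι] {w : ι → ℝ} (hw : ∀ i, 0 < w i) {ε : ℝ} (hε : 0 < ε)
    (i : ι) : 0 < laplaceScale w ε i :=
  div_pos (mul_pos (mod_cast Fintype.card_pos) (hw i)) hε

theorem sum_abs_sub_div_laplaceScale (w x y : ι → ℝ) (ε : ℝ) :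
    ∑ i, |x i - y i| / laplaceScale w ε i = ε * normalizedDist w x y := by
  rw [normalizedDist, Fintype.expect_eq_sum_div_card, sum_div, mul_sum]
  refine sum_congr rfl fun i _ ↦ ?_
  rw [laplaceScale, div_div_eq_mul_div]
  ring

theorem prod_laplaceDensity_le_exp_normalizedDist_mul [Nonempty ι] {w : ι → ℝ}
    (hw : ∀ i, 0 < w i) {ε : ℝ} (hε : 0 < ε) (x y r : ι → ℝ) :
    ∏ i, laplaceDensity (laplaceScale w ε i) (r i - x i) ≤
      exp (ε * normalizedDist w x y) *
        ∏ i, laplaceDensity (laplaceScale w ε i) (r i - y i) := by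
  simpa only [sum_abs_sub_div_laplaceScale] using
    prod_laplaceDensity_le_exp_sum_mul (laplaceScale_pos hw hε) x y r

theorem distance_range_and_eps_bound_general [Nonempty ι] {w x y : ι → ℝ}
    (hw : ∀ i, 0 < w i) (hxy : ∀ i, |x i - y i| ≤ w i) :
    (0 ≤ normalizedDist w x y ∧ normalizedDist w x y ≤ 1) ∧
    ∀ ε : ℝ, 0 < ε → ∀ r : ι → ℝ,
      ∏ i, laplaceDensity (laplaceScale w ε i) (r i - x i) ≤
        exp ε * ∏ i, laplaceDensity (laplaceScale w ε i) (r i - y i) := by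
  have dist_le_one : normalizedDist w x y ≤ 1 := normalizedDist_le_one hxy
  refine ⟨⟨normalizedDist_nonneg (fun i ↦ (hw i).le) x y, dist_le_one⟩, fun ε hε r ↦ ?_⟩
  have density_nonneg : 0 ≤ ∏ i, laplaceDensity (laplaceScale w ε i) (r i - y i) :=
    prod_nonneg fun i _ ↦ (laplaceDensity_pos (laplaceScale_pos hw hε i) _).le
  calc ∏ i, laplaceDensity (laplaceScale w ε i) (r i - x i)
      ≤ exp (ε * normalizedDist w x y) *
          ∏ i, laplaceDensity (laplaceScale w ε i) (r i - y i) :=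
        prod_laplaceDensity_le_exp_normalizedDist_mul hw hε x y r
    _ ≤ exp ε * ∏ i, laplaceDensity (laplaceScale w ε i) (r i - y i) := by
        gcongr
        exact mul_le_of_le_one_right hε.le dist_le_one

end Laplace

/-- the normalized distance between in-range secrets lies in
`[0,1]`, and consequently, for every `ε > 0`, with scales
`σ i = n * (b i - a i) / ε`, the multiplicative bound between any pair of
in-range secrets is at most `e^ε`. -/
theorem distance_range_and_eps_bound
    (n : ℕ) (hn : 1 ≤ n) (a b : Fin n → ℝ) (hab : ∀ i, a i < b i)
    (X₁ X₂ : Fin n → ℝ)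
    (hX₁ : ∀ i, a i ≤ X₁ i ∧ X₁ i ≤ b i)
    (hX₂ : ∀ i, a i ≤ X₂ i ∧ X₂ i ≤ b i) :
    (0 ≤ (∑ i, |X₁ i - X₂ i| / (b i - a i)) / n ∧
      (∑ i, |X₁ i - X₂ i| / (b i - a i)) / n ≤ 1) ∧
    ∀ ε : ℝ, 0 < ε → ∀ R : Fin n → ℝ,
      (∏ i, Real.exp (-|R i - X₁ i| / (n * (b i - a i) / ε)) /
          (2 * (n * (b i - a i) / ε))) ≤
        Real.exp ε *
          ∏ i, Real.exp (-|R i - X₂ i| / (n * (b i - a i) / ε)) /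
            (2 * (n * (b i - a i) / ε)) := by
  have : Nonempty (Fin n) := Fin.pos_iff_nonempty.mp hn
  simpa only [normalizedDist, laplaceScale, laplaceDensity, Fintype.expect_eq_sum_div_card,
    Fintype.card_fin] using distance_range_and_eps_bound_general (fun i ↦ sub_pos.2 (hab i))
      fun i ↦ Real.dist_le_of_mem_Icc (hX₁ i) (hX₂ i)
end

section
/- Let n ≥ 1, ε > 0, and for each i ∈ {1,…,n} let a_i < b_i be real bounds, with σ_i = n(b_i − a_i)/ε. Define the clamping map g : ℝⁿ → ℝⁿ by g(R)_i = max(a_i, min(b_i, R_i)). Then for all X₁, X₂ ∈ ℝⁿ and every measurable set S ⊆ ℝⁿ, the clamped Laplace mechanism satisfies ∫_{g⁻¹(S)} ∏_{i=1}^n f_{σ_i}(R_i − X₁ᵢ) dR ≤ exp(ε · d(X₁, X₂)) · ∫_{g⁻¹(S)} ∏_{i=1}^n f_{σ_i}(R_i − X₂ᵢ) dR. (This is the paper's claim that snapping each out-of-bounds noisy coordinate back to the nearest valid value in [a_i, b_i] preserves the ε-differential-privacy guarantee of Theorem 1.) -/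
open Real Finset MeasureTheory

/-!
Moving the centre of a Laplace density of scale `s` by `δ` changes it by a factor of at most
`exp (|δ| / s)`, by the triangle inequality, so the product density changes by a factor of at most
`exp (∑ i, |X₁ i - X₂ i| / σ i)`. The scales `σ i` are calibrated to make this exponent
`ε * d X₁ X₂`. A pointwise bound on densities integrates over every event, and clamping only
replaces the event `S` by `g ⁻¹' S`.
-/

/-- The density at `x` of the Laplace distribution with location `c` and scale `s`, that is
`f_s (x - c)` in the notation of the paper. -/
noncomputable def laplacePDFReal (c s x : ℝ) : ℝ :=
  exp (-|x - c| / s) / (2 * s)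

section laplacePDFReal

variable {s : ℝ}

lemma laplacePDFReal_nonneg (hs : 0 < s) (c x : ℝ) : 0 ≤ laplacePDFReal c s x := by
  unfold laplacePDFReal
  positivity

lemma integrable_exp_neg_abs_div (hs : 0 < s) : Integrable fun x : ℝ ↦ exp (-|x| / s) := by
  have h : IntegrableOn (fun x : ℝ ↦ exp (-s⁻¹ * x)) (Set.Ioi 0) :=
    integrableOn_exp_mul_Ioi (neg_lt_zero.2 (inv_pos.2 hs)) 0
  refine (integrable_fun_norm_addHaar volume (f := fun r : ℝ ↦ exp (-r / s))).2 ?_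
  simpa [neg_div, div_eq_inv_mul] using h

lemma integrable_laplacePDFReal (hs : 0 < s) (c : ℝ) : Integrable (laplacePDFReal c s) :=
  ((integrable_exp_neg_abs_div hs).comp_sub_right c).div_const (2 * s)

lemma laplacePDFReal_le_exp_mul (hs : 0 < s) (c₁ c₂ x : ℝ) :
    laplacePDFReal c₁ s x ≤ exp (|c₁ - c₂| / s) * laplacePDFReal c₂ s x := by
  have htri : -|x - c₁| ≤ |c₁ - c₂| + -|x - c₂| := by
    linarith [abs_sub_le x c₁ c₂]
  calc exp (-|x - c₁| / s) / (2 * s)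
      ≤ exp ((|c₁ - c₂| + -|x - c₂|) / s) / (2 * s) := by gcongr
    _ = exp (|c₁ - c₂| / s) * (exp (-|x - c₂| / s) / (2 * s)) := by
      rw [add_div, exp_add, mul_div_assoc]

end laplacePDFReal

section Product

variable {ι : Type*} [Fintype ι] {σ : ι → ℝ}

lemma prod_laplacePDFReal_le_exp_mul (hσ : ∀ i, 0 < σ i) (X₁ X₂ R : ι → ℝ) :
    ∏ i, laplacePDFReal (X₁ i) (σ i) (R i) ≤
      exp (∑ i, |X₁ i - X₂ i| / σ i) * ∏ i, laplacePDFReal (X₂ i) (σ i) (R i) := by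
  rw [exp_sum, ← prod_mul_distrib]
  exact prod_le_prod (fun i _ ↦ laplacePDFReal_nonneg (hσ i) _ _)
    fun i _ ↦ laplacePDFReal_le_exp_mul (hσ i) _ _ _

theorem clamped_laplace_mechanism_dp_general (hσ : ∀ i, 0 < σ i) (X₁ X₂ : ι → ℝ)
    (T : Set (ι → ℝ)) :
    ∫ R in T, ∏ i, laplacePDFReal (X₁ i) (σ i) (R i) ≤
      exp (∑ i, |X₁ i - X₂ i| / σ i) *
        ∫ R in T, ∏ i, laplacePDFReal (X₂ i) (σ i) (R i) := by
  have hint : Integrable fun R : ι → ℝ ↦ ∏ i, laplacePDFReal (X₂ i) (σ i) (R i) :=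
    Integrable.fintype_prod fun i ↦ integrable_laplacePDFReal (hσ i) (X₂ i)
  rw [← integral_const_mul]
  exact integral_mono_of_nonneg
    (ae_of_all _ fun R ↦ prod_nonneg fun i _ ↦ laplacePDFReal_nonneg (hσ i) _ _)
    (hint.integrableOn.const_mul _)
    (ae_of_all _ fun R ↦ prod_laplacePDFReal_le_exp_mul hσ X₁ X₂ R)

end Product

lemma mul_sum_div_div_eq_sum {ι K : Type*} [Semifield K] (t : Finset ι) (ε N : K) (u w : ι → K) :
    ε * ((∑ i ∈ t, u i / w i) / N) = ∑ i ∈ t, u i / (N * w i / ε) := by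
  rw [sum_div, mul_sum]
  exact sum_congr rfl fun i _ ↦ by rw [div_div_eq_mul_div]; ring

/-- the clamped Laplace mechanism preserves the
`ε`-differential-privacy guarantee of Theorem 1. With Laplace scales
`σ i = n * (b i - a i) / ε` and the clamping map
`g R i = max (a i) (min (b i) (R i))`, for all `X₁ X₂` and every measurable
set `S`, the probability (integral of the density over `g ⁻¹' S`) under `X₁`
is at most `exp (ε * d X₁ X₂)` times that under `X₂`. -/
theorem clamped_laplace_mechanism_dp
    (n : ℕ) (hn : 1 ≤ n) (ε : ℝ) (hε : 0 < ε)
    (a b : Fin n → ℝ) (hab : ∀ i, a i < b i)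
    (σ : Fin n → ℝ) (hσ : ∀ i, σ i = n * (b i - a i) / ε)
    (g : (Fin n → ℝ) → (Fin n → ℝ))
    (hg : ∀ (R : Fin n → ℝ) (i : Fin n), g R i = max (a i) (min (b i) (R i)))
    (X₁ X₂ : Fin n → ℝ) (S : Set (Fin n → ℝ)) (hS : MeasurableSet S) :
    (∫ R in g ⁻¹' S, ∏ i, Real.exp (-|R i - X₁ i| / σ i) / (2 * σ i)) ≤
      Real.exp (ε * ((∑ i, |X₁ i - X₂ i| / (b i - a i)) / n)) *
        ∫ R in g ⁻¹' S, ∏ i, Real.exp (-|R i - X₂ i| / σ i) / (2 * σ i) := by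
  have hσ_pos (i : Fin n) : 0 < σ i :=
    hσ i ▸ div_pos (mul_pos (Nat.cast_pos.2 hn) (sub_pos.2 (hab i))) hε
  simpa only [mul_sum_div_div_eq_sum, ← hσ] using!
    clamped_laplace_mechanism_dp_general hσ_pos X₁ X₂ (g ⁻¹' S)
end
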